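/- arXiv:math/0701265 — 2 statements merged into one kernel-verified Lean document; each statement's English description precedes it below -/
import Mathlib

section
/- There exist a real number τ with |τ - 1.570796| ≤ 0.000001 and a 2π-periodic C¹ function x : ℝ → ℝ satisfying x'(t) = -(1.6/τ)·sin(x(t-τ)) for all t ∈ ℝ, whose first Fourier coefficient c₁ = (1/2π)∫₀^{2π} x(t) e^{-it} dt satisfies |c₁ - (-0.1521 - 0.1163508047·i)| ≤ 0.0000002438; in particular x is nonconstant. -/
open scoped Real
open Complex Filter

/-- Convolution of two two-sided sequences of complex numbers. -/
noncomputable def conv (x y : ℤ → ℂ) : ℤ → ℂ := fun n => ∑' k : ℤ, x k * y (n - k)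

/-- `convPow x k` is the `k`-fold convolution power `x^{*k}`;
`x^{*0}` is the unit (Kronecker delta at `0`). -/
noncomputable def convPow (x : ℤ → ℂ) : ℕ → ℤ → ℂ
  | 0 => fun n => if n = 0 then 1 else 0
  | k + 1 => conv (convPow x k) x

/-- Membership in `X_β`: decay `|x_n| ≤ β/(|n|+1)^2` and the symmetry `x_{-n} = conj x_n`. -/
def memX (β : ℝ) (x : ℤ → ℂ) : Prop :=
  (∀ n : ℤ, ‖x n‖ ≤ β / (|(n : ℝ)| + 1) ^ 2) ∧ (∀ n : ℤ, x (-n) = starRingEnd ℂ (x n))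


noncomputable def ex (k : ℤ) (t : ℝ) : ℂ := Complex.exp (((k : ℝ) * t : ℝ) * Complex.I)

noncomputable def Fs (p : ℤ) (c : ℤ → ℂ) (t : ℝ) : ℂ := ∑' n : ℤ, c n * ex (2 * n + p) t

lemma ex_norm (k : ℤ) (t : ℝ) : ‖ex k t‖ = 1 := by
  unfold ex; exact Complex.norm_exp_ofReal_mul_I _

lemma ex_add (j k : ℤ) (t : ℝ) : ex (j + k) t = ex j t * ex k t := by
  unfold ex; rw [← Complex.exp_add]; congr 1; push_cast; ring

lemma ex_add_t (k : ℤ) (t s : ℝ) : ex k (t + s) = ex k t * ex k s := by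
  unfold ex; rw [← Complex.exp_add]; congr 1; push_cast; ring

lemma ex_neg (k : ℤ) (t : ℝ) : ex k (-t) = ex (-k) t := by
  unfold ex; congr 1; push_cast; ring

lemma ex_conj (k : ℤ) (t : ℝ) : (starRingEnd ℂ) (ex k t) = ex (-k) t := by
  unfold ex; rw [← Complex.exp_conj]; congr 1; simp

lemma Fs_summable {p : ℤ} {c : ℤ → ℂ} (hc : Summable fun n => ‖c n‖) (t : ℝ) :
    Summable fun n : ℤ => ‖c n * ex (2 * n + p) t‖ := by
  simpa [ex_norm] using hc

lemma Fs_add {p : ℤ} {a b : ℤ → ℂ} (ha : Summable fun n => ‖a n‖) (hb : Summable fun n => ‖b n‖)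
    (t : ℝ) : Fs p a t + Fs p b t = Fs p (fun n => a n + b n) t := by
  unfold Fs
  rw [← (Fs_summable ha t).of_norm.tsum_add (Fs_summable hb t).of_norm]
  congr 1; ext n; ring

lemma Fs_smul {p : ℤ} (k : ℂ) (a : ℤ → ℂ) 
    (t : ℝ) : k * Fs p a t = Fs p (fun n => k * a n) t := by
  unfold Fs
  rw [← tsum_mul_left]
  congr 1; ext n; ring

lemma Fs_shift (p : ℤ) (c : ℤ → ℂ) (t s : ℝ) :
    Fs p c (t + s) = Fs p (fun n => c n * ex (2 * n + p) s) t := by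
  unfold Fs; congr 1; ext n; rw [ex_add_t]; ring

lemma Fs_neg (p : ℤ) (c : ℤ → ℂ) (t : ℝ) :
    Fs p c (-t) = Fs p (fun n => c (-p - n)) t := by
  unfold Fs
  rw [← (Equiv.subLeft (-p)).tsum_eq]
  congr 1; ext n
  simp only [Equiv.subLeft_apply, ex_neg]
  congr 2; ring

lemma Fs_conj (p : ℤ) (c : ℤ → ℂ) (t : ℝ) :
    (starRingEnd ℂ) (Fs p c t) = Fs p (fun n => (starRingEnd ℂ) (c (-p - n))) t := by
  unfold Fs
  rw [Complex.conj_tsum, ← (Equiv.subLeft (-p)).tsum_eq]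
  congr 1; ext n
  simp only [Equiv.subLeft_apply, map_mul, ex_conj]
  congr 2; ring

lemma Fs_mul {p r : ℤ} {a b : ℤ → ℂ} (ha : Summable fun n => ‖a n‖) (hb : Summable fun n => ‖b n‖)
    (t : ℝ) : Fs p a t * Fs r b t = Fs (p + r) (conv a b) t := by
  unfold Fs
  have hs := summable_mul_of_summable_norm (Fs_summable (p := p) ha t) (Fs_summable (p := r) hb t)
  rw [tsum_mul_tsum_of_summable_norm (Fs_summable ha t) (Fs_summable hb t)]
  let e : ℤ × ℤ ≃ ℤ × ℤ :=
    { toFun := fun x => (x.2, x.1 - x.2)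
      invFun := fun y => (y.1 + y.2, y.1)
      left_inv := by intro x; ext <;> simp
      right_inv := by intro x; ext <;> simp }
  rw [← e.tsum_eq]
  have hs' := (e.summable_iff).2 hs
  rw [Summable.tsum_prod (f := fun c => a (e c).1 * ex (2 * (e c).1 + p) t * (b (e c).2 * ex (2 * (e c).2 + r) t)) hs']
  congr 1; ext N
  unfold conv
  rw [← tsum_mul_right]
  congr 1; ext i
  simp only [e, Equiv.coe_fn_mk]
  have : 2 * N + (p + r) = (2 * i + p) + (2 * (N - i) + r) := by ring
  rw [this, ex_add (2 * i + p) (2 * (N - i) + r)]; ring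

lemma ex_hasDeriv (k : ℤ) (t : ℝ) : HasDerivAt (ex k) (Complex.I * k * ex k t) t := by
  unfold ex
  have h1 : HasDerivAt (fun t : ℝ => (((k : ℝ) * t : ℝ) : ℂ) * Complex.I) ((k : ℂ) * Complex.I) t := by
    have := ((hasDerivAt_id t).const_mul (k : ℝ)).ofReal_comp.mul_const Complex.I
    simpa using this
  convert h1.cexp using 1
  ring

lemma Fs_hasDeriv {p : ℤ} {c : ℤ → ℂ} (hc : Summable fun n => ‖c n‖)
    (hd : Summable fun n => ‖((2 * n + p : ℤ) : ℂ) * c n‖) (t : ℝ) :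
    HasDerivAt (Fs p c) (Fs p (fun n => Complex.I * (((2 * n + p : ℤ) : ℂ) * c n)) t) t := by
  unfold Fs
  have := hasDerivAt_tsum (u := fun n => ‖((2 * n + p : ℤ) : ℂ) * c n‖)
    (g := fun n t => c n * ex (2 * n + p) t)
    (g' := fun n t => Complex.I * (((2 * n + p : ℤ) : ℂ) * c n) * ex (2 * n + p) t) hd
    (fun n y => by
      have := (ex_hasDeriv (2 * n + p) y).const_mul (c n)
      rwa [show c n * (Complex.I * ((2 * n + p : ℤ) : ℂ) * ex (2 * n + p) y) =
        Complex.I * (((2 * n + p : ℤ) : ℂ) * c n) * ex (2 * n + p) y by ring] at this)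
    (fun n y => by simp [ex_norm])
    (y₀ := 0) (Fs_summable hc 0).of_norm t
  exact this

lemma Fs_continuous {p : ℤ} {c : ℤ → ℂ} (hc : Summable fun n => ‖c n‖) : Continuous (Fs p c) := by
  unfold Fs
  refine continuous_tsum (u := fun n => ‖c n‖) (fun n => ?_) hc (fun n t => by simp [ex_norm])
  exact continuous_const.mul (continuous_iff_continuousAt.2 fun t => (ex_hasDeriv _ t).continuousAt)

lemma ex_two_pi (k : ℤ) : ex k (2 * π) = 1 := by
  unfold ex
  rw [Complex.exp_eq_one_iff]
  exact ⟨k, by push_cast; ring⟩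

lemma Fs_periodic (p : ℤ) (c : ℤ → ℂ) : Function.Periodic (Fs p c) (2 * π) := by
  intro t
  rw [Fs_shift]; simp [ex_two_pi]

lemma ex_integral (k : ℤ) : ∫ t in (0 : ℝ)..(2 * π), ex k t = if k = 0 then (2 * π : ℂ) else 0 := by
  split_ifs with hk
  · subst hk; simp [ex]
  · have hk' : (Complex.I * k : ℂ) ≠ 0 := by simp [hk]
    have hder : ∀ t ∈ Set.uIcc (0:ℝ) (2 * π), HasDerivAt (fun t => (Complex.I * k)⁻¹ * ex k t) (ex k t) t := by
      intro t _
      have := (ex_hasDeriv k t).const_mul (Complex.I * k : ℂ)⁻¹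
      rwa [← mul_assoc, inv_mul_cancel₀ hk', one_mul] at this
    rw [intervalIntegral.integral_eq_sub_of_hasDerivAt hder]
    · have : ex k 0 = 1 := by simp [ex]
      simp [ex_two_pi, this]
    · apply Continuous.intervalIntegrable
      exact continuous_iff_continuousAt.2 fun t => (ex_hasDeriv _ t).continuousAt

lemma Fs_coeff {c : ℤ → ℂ} (hc : Summable fun n => ‖c n‖) :
    ∫ t in (0 : ℝ)..(2 * π), Fs 1 c t * Complex.exp (-(Complex.I * t)) = 2 * π * c 0 := by
  have h1 : ∀ t : ℝ, Fs 1 c t * Complex.exp (-(Complex.I * t)) = Fs 0 c t := by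
    intro t
    unfold Fs
    rw [← tsum_mul_right]
    congr 1; ext n
    have : Complex.exp (-(Complex.I * t)) = ex (-1) t := by
      unfold ex; congr 1; push_cast; ring
    rw [this, mul_assoc, ← ex_add]; congr 2; ring
  simp_rw [h1]
  have hexc : ∀ k, Continuous (ex k) := fun k => 
    continuous_iff_continuousAt.2 fun t => (ex_hasDeriv k t).continuousAt
  have := intervalIntegral.hasSum_integral_of_dominated_convergence (a := 0) (b := 2 * π)
    (μ := MeasureTheory.volume)
    (F := fun n t => c n * ex (2 * n + 0) t) (f := Fs 0 c)
    (fun n _ => ‖c n‖) (fun n => (continuous_const.mul (hexc _)).aestronglyMeasurable)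
    (fun n => by simp [ex_norm]) (by simp [hc]) (by simp)
    (by refine Filter.Eventually.of_forall fun t _ => (Fs_summable hc t).of_norm.hasSum)
  refine this.unique ?_
  simp_rw [intervalIntegral.integral_const_mul, ex_integral]
  have h2 : (fun n : ℤ => c n * if 2 * n + 0 = 0 then (2 * π : ℂ) else 0) =
      fun n => if n = 0 then (2 * π * c 0 : ℂ) else 0 := by
    ext n
    by_cases hn : n = 0
    · subst hn; simp; ring
    · simp [hn]
  rw [h2]
  exact hasSum_ite_eq (0 : ℤ) (2 * π * c 0 : ℂ)

lemma hs_cg {f g : ℤ → ℝ} {a b : ℝ} (h : HasSum f a) (hf : ∀ i, g i = f i) (hab : b = a) :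
    HasSum g b := by
  rw [hab, show g = f from funext hf]; exact h

noncomputable def sc (h : ℝ) (m : ℤ) : ℝ := (Real.cosh (m * h))⁻¹
noncomputable def cs (h : ℝ) (m : ℤ) : ℝ := (Real.sinh (m * h))⁻¹
noncomputable def th (h : ℝ) (m : ℤ) : ℝ := Real.sinh (m * h) / Real.cosh (m * h)
noncomputable def co (h : ℝ) (m : ℤ) : ℝ := Real.cosh (m * h) / Real.sinh (m * h)

lemma sc_pos (h : ℝ) (m : ℤ) : 0 < sc h m := inv_pos.2 (Real.cosh_pos _)
lemma sc_le_one (h : ℝ) (m : ℤ) : sc h m ≤ 1 := inv_le_one_of_one_le₀ (Real.one_le_cosh _)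
lemma sc_neg (h : ℝ) (m : ℤ) : sc h (-m) = sc h m := by simp [sc]
lemma cs_neg (h : ℝ) (m : ℤ) : cs h (-m) = - cs h m := by simp [cs, inv_neg]
lemma th_neg (h : ℝ) (m : ℤ) : th h (-m) = - th h m := by simp [th, neg_div]
lemma co_neg (h : ℝ) (m : ℤ) : co h (-m) = - co h m := by simp [co, div_neg]

lemma summable_int_exp {h : ℝ} (hh : 0 < h) (k : ℕ) :
    Summable fun m : ℤ => |(m : ℝ)| ^ k * Real.exp (-h * |(m : ℝ)|) := by
  have := Real.summable_pow_mul_exp_neg_nat_mul k hh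
  apply Summable.of_nat_of_neg <;> simpa using this

lemma sc_le_exp {h : ℝ} (hh : 0 < h) (m : ℤ) : sc h m ≤ 2 * Real.exp (-h * |(m : ℝ)|) := by
  unfold sc
  rw [← Real.cosh_abs, abs_mul, abs_of_pos hh, Real.cosh_eq]
  have h1 := Real.exp_pos (|(m:ℝ)| * h)
  have h2 := Real.exp_pos (-(|(m:ℝ)| * h))
  have h3 : Real.exp (-h * |(m:ℝ)|) = (Real.exp (|(m:ℝ)| * h))⁻¹ := by
    rw [← Real.exp_neg]; congr 1; ring
  rw [h3, inv_le_comm₀ (by positivity) (by positivity), mul_inv, inv_inv]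
  linarith

lemma summable_sc {h : ℝ} (hh : 0 < h) : Summable (sc h) := by
  refine Summable.of_nonneg_of_le (fun m => (sc_pos h m).le) (sc_le_exp hh) ?_
  simpa using (summable_int_exp hh 0).mul_left 2

lemma summable_abs_sc {h : ℝ} (hh : 0 < h) : Summable fun m : ℤ => |(m : ℝ)| * sc h m := by
  refine Summable.of_nonneg_of_le (fun m => mul_nonneg (abs_nonneg _) (sc_pos h m).le)
    (fun m => mul_le_mul_of_nonneg_left (sc_le_exp hh m) (abs_nonneg _)) ?_
  have := (summable_int_exp hh 1).mul_left 2
  refine this.congr fun m => ?_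
  ring

lemma one_le_abs_int {m : ℤ} (hm : m ≠ 0) : (1 : ℝ) ≤ |(m : ℝ)| := by
  have := Int.one_le_abs hm
  exact_mod_cast this

lemma abs_cs_le {h : ℝ} (hh : 0 < h) (m : ℤ) :
    |cs h m| ≤ (Real.cosh h / Real.sinh h) * sc h m := by
  have hs : 0 < Real.sinh h := Real.sinh_pos_iff.2 hh
  have hc := Real.cosh_pos h
  by_cases hm : m = 0
  · subst hm
    simp only [cs, Int.cast_zero, zero_mul, Real.sinh_zero, inv_zero, abs_zero]
    have := sc_pos h 0
    positivity
  · unfold cs sc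
    have h1 : h ≤ |(m : ℝ) * h| := by
      rw [abs_mul, abs_of_pos hh]
      nlinarith [one_le_abs_int hm]
    rw [abs_inv, Real.abs_sinh, ← Real.cosh_abs ((m : ℝ) * h)]
    set y := |(m:ℝ) * h|
    have hsy : 0 < Real.sinh y := Real.sinh_pos_iff.2 (by linarith)
    have hcy := Real.cosh_pos y
    have h2 : 0 ≤ Real.sinh (y - h) := Real.sinh_nonneg_iff.2 (by linarith)
    rw [Real.sinh_sub] at h2
    rw [← div_eq_mul_inv, inv_eq_one_div, div_div, div_le_div_iff₀ hsy (by positivity)]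
    linarith

lemma summable_cs {h : ℝ} (hh : 0 < h) : Summable fun m => |cs h m| :=
  Summable.of_nonneg_of_le (fun m => abs_nonneg _) (abs_cs_le hh) ((summable_sc hh).mul_left _)

lemma summable_abs_cs {h : ℝ} (hh : 0 < h) : Summable fun m : ℤ => |(m : ℝ)| * |cs h m| := by
  refine Summable.of_nonneg_of_le (fun m => mul_nonneg (abs_nonneg _) (abs_nonneg _))
    (fun m => mul_le_mul_of_nonneg_left (abs_cs_le hh m) (abs_nonneg _)) ?_
  have := (summable_abs_sc hh).mul_left (Real.cosh h / Real.sinh h)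
  refine this.congr fun m => ?_
  ring

lemma inj_two (e : ℤ) : Function.Injective fun n : ℤ => 2 * n + e := by
  intro a b hab; simp at hab; exact hab

lemma sinh_ne {h : ℝ} (hh : 0 < h) {m : ℤ} (hm : m ≠ 0) : Real.sinh (m * h) ≠ 0 := by
  rw [Ne, Real.sinh_eq_zero]
  simp [hm, hh.ne']

lemma th_add_th (h : ℝ) (a b : ℤ) :
    th h a + th h b = Real.sinh (((a + b : ℤ) : ℝ) * h) * (sc h a * sc h b) := by
  unfold th sc
  have h1 := (Real.cosh_pos (a * h)).ne'
  have h2 := (Real.cosh_pos (b * h)).ne'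
  push_cast
  rw [add_mul, Real.sinh_add]
  field_simp
  try ring

lemma co_add_th {h : ℝ} (hh : 0 < h) (a b : ℤ) (ha : a ≠ 0) :
    co h a + th h b = Real.cosh (((a + b : ℤ) : ℝ) * h) * (cs h a * sc h b) := by
  unfold th sc co cs
  have h1 := sinh_ne hh ha
  have h2 := (Real.cosh_pos (b * h)).ne'
  push_cast
  rw [add_mul, Real.cosh_add]
  field_simp
  try ring

lemma tendsto_th {h : ℝ} (hh : 0 < h) : Tendsto (th h) atTop (nhds 1) := by
  have h0 : Tendsto (sc h) atTop (nhds 0) := by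
    have := (summable_sc hh).tendsto_cofinite_zero
    exact this.mono_left (by rw [Int.cofinite_eq]; exact le_sup_right)
  have h1 : Tendsto (fun m => 1 - sc h m) atTop (nhds 1) := by simpa using h0.const_sub 1
  refine tendsto_of_tendsto_of_tendsto_of_le_of_le' h1 tendsto_const_nhds ?_ ?_
  · filter_upwards [eventually_ge_atTop 0] with m hm
    unfold th sc
    have h1 := Real.cosh_pos (m * h)
    have h2 : Real.exp (-(m * h)) ≤ 1 := by
      rw [Real.exp_le_one_iff]
      have : (0:ℝ) ≤ m := by exact_mod_cast hm
      nlinarith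
    have h3 := Real.cosh_sub_sinh (m * h)
    rw [le_div_iff₀ h1, sub_mul, inv_mul_cancel₀ h1.ne']
    linarith
  · filter_upwards with m
    unfold th
    rw [div_le_one (Real.cosh_pos _)]
    exact (Real.sinh_lt_cosh _).le

lemma summable_prod {a b : ℤ → ℝ} (ha : Summable fun n => |a n|) (hb : ∀ n, |b n| ≤ 1) :
    Summable fun n => a n * b n := by
  refine Summable.of_norm_bounded ha fun n => ?_
  rw [Real.norm_eq_abs, abs_mul]
  exact mul_le_of_le_one_right (abs_nonneg _) (hb n)

lemma abs_sc_le (h : ℝ) (m : ℤ) : |sc h m| ≤ 1 := by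
  rw [abs_of_pos (sc_pos h m)]; exact sc_le_one h m

lemma summable_sc_abs {h : ℝ} (hh : 0 < h) : Summable fun m => |sc h m| := (summable_sc hh).abs

lemma th_step {h : ℝ} (hh : 0 < h) (e : ℤ) :
    HasSum (fun i : ℤ => th h (2 * (i + 1) + e) - th h (2 * i + e)) 2 := by
  have hs : Summable (fun i : ℤ => th h (2 * (i + 1) + e) - th h (2 * i + e)) := by
    have h1 : Summable fun i : ℤ => sc h (2 * i + e) * sc h (2 * (i + 1) + e) :=
      summable_prod ((summable_sc_abs hh).comp_injective (inj_two e)) fun n => abs_sc_le _ _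
    refine (h1.mul_left (Real.sinh (((2 : ℤ) : ℝ) * h))).congr fun i => ?_
    rw [sub_eq_add_neg, ← th_neg, th_add_th, sc_neg]
    rw [show 2 * (i + 1) + e + -(2 * i + e) = 2 by ring]; ring
  have key : ∀ g : ℕ → ℝ, ∀ l, Tendsto g atTop (nhds l) → Summable (fun n => g (n + 1) - g n) →
      HasSum (fun n => g (n + 1) - g n) (l - g 0) := by
    intro g l hg hsg
    have h1 := hsg.hasSum.tendsto_sum_nat
    simp_rw [Finset.sum_range_sub] at h1
    have h2 := tendsto_nhds_unique h1 (hg.sub_const (g 0))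
    rw [← h2]; exact hsg.hasSum
  have tp : ∀ e' : ℤ, Tendsto (fun n : ℕ => th h (2 * n + e')) atTop (nhds 1) := by
    intro e'
    refine (tendsto_th hh).comp ?_
    refine tendsto_atTop_mono (f := fun n : ℕ => (n : ℤ) + e') (fun n => by omega) ?_
    exact tendsto_atTop_add_const_right _ _ tendsto_natCast_atTop_atTop
  have hpos : HasSum (fun n : ℕ => th h (2 * ((n : ℤ) + 1) + e) - th h (2 * (n : ℤ) + e)) (1 - th h e) := by
    have := key (fun n : ℕ => th h (2 * n + e)) 1 (tp e) (by
      have := hs.comp_injective (Nat.cast_injective (R := ℤ))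
      simpa [Function.comp_def] using this)
    simpa using this
  have hneg : HasSum (fun n : ℕ => th h (2 * (-((n : ℤ) + 1) + 1) + e) - th h (2 * (-((n : ℤ) + 1)) + e)) (1 + th h e) := by
    have e1 : (fun n : ℕ => th h (2 * (-((n : ℤ) + 1) + 1) + e) - th h (2 * (-((n : ℤ) + 1)) + e)) =
       fun n : ℕ => th h (2 * ((n + 1 : ℕ) : ℤ) + -e) - th h (2 * (n : ℤ) + -e) := by
      ext n
      rw [show 2 * (-((n : ℤ) + 1) + 1) + e = -(2 * (n : ℤ) + -e) by ring,
        show 2 * (-((n : ℤ) + 1)) + e = -(2 * ((n + 1 : ℕ) : ℤ) + -e) by push_cast; ring, th_neg, th_neg]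
      ring
    have hi : Function.Injective fun n : ℕ => -((n : ℤ) + 1) := by
      intro a b hab; simp at hab; exact hab
    have hs2 := hs.comp_injective hi
    have hs3 : Summable (fun n : ℕ => th h (2 * ((n + 1 : ℕ) : ℤ) + -e) - th h (2 * (n : ℤ) + -e)) := by
      rw [← e1]; exact hs2
    rw [e1]
    have := key (fun n : ℕ => th h (2 * n + -e)) 1 (tp (-e)) hs3
    simpa [th_neg] using this
  have := HasSum.of_nat_of_neg_add_one (f := fun i : ℤ => th h (2 * (i + 1) + e) - th h (2 * i + e)) hpos hneg
  exact hs_cg this (fun i => rfl) (by ring)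

lemma th_tele {h : ℝ} (hh : 0 < h) (e M : ℤ) :
    HasSum (fun i : ℤ => th h (2 * (i + M) + e) - th h (2 * i + e)) (2 * M) := by
  induction M using Int.induction_on with
  | zero => simpa using hasSum_zero
  | succ k ih =>
    have h1 := (Equiv.addRight (k : ℤ)).hasSum_iff.2 (th_step hh e)
    refine hs_cg (ih.add h1) (fun i => ?_) ?_
    · simp only [Function.comp, Equiv.coe_addRight]
      rw [show i + ((k:ℤ) + 1) = i + k + 1 by ring]; ring
    · push_cast; ring
  | pred k ih =>
    have h1 := (Equiv.addRight (-(k : ℤ) - 1)).hasSum_iff.2 (th_step hh e)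
    refine hs_cg (ih.sub h1) (fun i => ?_) ?_
    · simp only [Function.comp, Equiv.coe_addRight]
      rw [show i + (-(k:ℤ) - 1) + 1 = i + -k by ring]; ring
    · push_cast; ring

lemma pair_sum {h : ℝ} (hh : 0 < h) (e N : ℤ) (f : ℤ → ℝ) (hf : ∀ i, f (-1 - i) = - f i)
    (hs : Summable fun i => f i + th h (2 * (N - i) + e)) :
    HasSum (fun i => f i + th h (2 * (N - i) + e)) (2 * N + 1 + e) := by
  obtain ⟨L, hL⟩ := hs
  have h2 := (Equiv.subLeft (-1 : ℤ)).hasSum_iff.2 hL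
  have h3 := hL.add h2
  have h4 := (Equiv.addRight (-N - e)).hasSum_iff.2 (th_tele hh e (2 * N + 1 + e))
  have h5 : L + L = 2 * ((2 * N + 1 + e : ℤ) : ℝ) := by
    refine h3.unique ?_
    refine hs_cg h4 (fun i => ?_) rfl
    simp only [Function.comp, Equiv.coe_addRight, Equiv.subLeft_apply, hf]
    rw [show 2 * (i + (-N - e)) + e = -(2 * (N - i) + e) by ring, th_neg,
      show 2 * (i + (-N - e) + (2 * N + 1 + e)) + e = 2 * (N - (-1 - i)) + e by ring]
    ring
  have : L = 2 * N + 1 + e := by push_cast at h5; linarith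
  rwa [this] at hL

lemma odd_ne (i : ℤ) : 2 * i + 1 ≠ 0 := by omega

lemma conv_sc_sc {h : ℝ} (hh : 0 < h) (N : ℤ) :
    HasSum (fun i : ℤ => sc h (2 * i + 1) * sc h (2 * (N - i) + 0)) ((2 * N + 1 : ℤ) * cs h (2 * N + 1)) := by
  have hs : Summable fun i : ℤ => sc h (2 * i + 1) * sc h (2 * (N - i) + 0) :=
      summable_prod ((summable_sc_abs hh).comp_injective (inj_two 1)) fun n => abs_sc_le _ _
  have e1 : ∀ i : ℤ, th h (2 * i + 1) + th h (2 * (N - i) + 0) =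
      Real.sinh (((2 * N + 1 : ℤ) : ℝ) * h) * (sc h (2 * i + 1) * sc h (2 * (N - i) + 0)) := by
    intro i; rw [th_add_th, show 2 * i + 1 + (2 * (N - i) + 0) = 2 * N + 1 by ring]
  have := pair_sum hh 0 N (fun i => th h (2 * i + 1))
    (fun i => by rw [← th_neg]; congr 1; ring) ((hs.mul_left _).congr fun i => (e1 i).symm)
  simp_rw [e1] at this
  have h2 := this.mul_left (cs h (2 * N + 1))
  have hne := sinh_ne hh (odd_ne N)
  refine hs_cg (h2) (fun i => ?_) ?_
  · unfold cs; rw [inv_mul_cancel_left₀ hne]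
  · push_cast; ring

lemma conv_cs_sc {h : ℝ} (hh : 0 < h) (e N : ℤ) :
    HasSum (fun i : ℤ => cs h (2 * i + 1) * sc h (2 * (N - i) + e))
      ((2 * N + 1 + e : ℤ) * sc h (2 * N + 1 + e)) := by
  have hs : Summable fun i : ℤ => cs h (2 * i + 1) * sc h (2 * (N - i) + e) :=
      summable_prod ((summable_cs hh).comp_injective (inj_two 1)) fun n => abs_sc_le _ _
  have e1 : ∀ i : ℤ, co h (2 * i + 1) + th h (2 * (N - i) + e) =
      Real.cosh (((2 * N + 1 + e : ℤ) : ℝ) * h) * (cs h (2 * i + 1) * sc h (2 * (N - i) + e)) := by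
    intro i; rw [co_add_th hh _ _ (odd_ne i), show 2 * i + 1 + (2 * (N - i) + e) = 2 * N + 1 + e by ring]
  have := pair_sum hh e N (fun i => co h (2 * i + 1))
    (fun i => by rw [← co_neg]; congr 1; ring) ((hs.mul_left _).congr fun i => (e1 i).symm)
  simp_rw [e1] at this
  have h2 := this.mul_left (sc h (2 * N + 1 + e))
  have hne := (Real.cosh_pos (((2 * N + 1 + e : ℤ) : ℝ) * h)).ne'
  refine hs_cg (h2) (fun i => ?_) ?_
  · unfold sc; rw [inv_mul_cancel_left₀ hne]
  · push_cast; ring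

lemma neg_one_zpow_sq (i : ℤ) : ((-1 : ℝ) ^ i) = 1 ∨ ((-1 : ℝ) ^ i) = -1 := by
  rcases Int.even_or_odd i with h | h
  · left; exact h.neg_one_zpow
  · right; exact h.neg_one_zpow

noncomputable def TT (h : ℝ) : ℝ := ∑' i : ℤ, (-1 : ℝ) ^ i * (co h (2 * i + 1) + th h (2 * (0 - i)))

lemma alt_sum {h : ℝ} (hh : 0 < h) (N : ℤ) :
    HasSum (fun i : ℤ => (-1 : ℝ) ^ i * (co h (2 * i + 1) + th h (2 * (N - i)))) (TT h) := by
  have hs : ∀ N : ℤ, Summable fun i : ℤ => (-1 : ℝ) ^ i * (co h (2 * i + 1) + th h (2 * (N - i))) := by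
    intro N
    have h1 : Summable fun i : ℤ => cs h (2 * i + 1) * ((-1 : ℝ) ^ i * sc h (2 * (N - i))) :=
      summable_prod ((summable_cs hh).comp_injective (inj_two 1)) fun n => by
        rw [abs_mul]
        have := abs_sc_le h (2 * (N - n))
        rcases neg_one_zpow_sq n with h | h <;> rw [h] <;> simpa
    refine (h1.mul_left (Real.cosh (((2 * N + 1 : ℤ) : ℝ) * h))).congr fun i => ?_
    rw [co_add_th hh _ _ (odd_ne i), show 2 * i + 1 + (2 * (N - i)) = 2 * N + 1 by ring]
    ring
  have step : ∀ N : ℤ, ∑' i : ℤ, (-1 : ℝ) ^ i * (co h (2 * i + 1) + th h (2 * (N + 1 - i))) =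
      ∑' i : ℤ, (-1 : ℝ) ^ i * (co h (2 * i + 1) + th h (2 * (N - i))) := by
    intro N
    rw [← sub_eq_zero, ← (hs (N + 1)).tsum_sub (hs N)]
    set L := ∑' b : ℤ, ((-1 : ℝ) ^ b * (co h (2 * b + 1) + th h (2 * (N + 1 - b))) -
      (-1 : ℝ) ^ b * (co h (2 * b + 1) + th h (2 * (N - b)))) with hL
    have : L = -L := by
      conv_lhs => rw [hL, ← (Equiv.subLeft (2 * N + 1)).tsum_eq]
      rw [hL, ← tsum_neg]
      congr 1; ext i
      simp only [Equiv.subLeft_apply]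
      have : (-1 : ℝ) ^ (2 * N + 1 - i) = - (-1 : ℝ) ^ i := by
        rw [sub_eq_add_neg, zpow_add₀ (by norm_num), zpow_add₀ (by norm_num), zpow_mul]
        simp
        rcases neg_one_zpow_sq i with h | h <;> rw [h] <;> norm_num
      rw [this, show 2 * (N + 1 - (2 * N + 1 - i)) = - (2 * (N - i)) by ring,
        show 2 * (N - (2 * N + 1 - i)) = - (2 * (N + 1 - i)) by ring, th_neg, th_neg]
      ring
    linarith
  have all : ∀ N : ℤ, ∑' i : ℤ, (-1 : ℝ) ^ i * (co h (2 * i + 1) + th h (2 * (N - i))) = TT h := by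
    intro N
    induction N using Int.induction_on with
    | zero => rfl
    | succ k ih => rw [step, ih]
    | pred k ih => rw [← ih, ← step]; simp
  rw [← all N]; exact (hs N).hasSum

lemma conv_alt {h : ℝ} (hh : 0 < h) (N : ℤ) :
    HasSum (fun i : ℤ => (-1 : ℝ) ^ i * (cs h (2 * i + 1) * sc h (2 * (N - i))))
      (TT h * sc h (2 * N + 1)) := by
  have h2 := (alt_sum hh N).mul_left (sc h (2 * N + 1))
  have hne := (Real.cosh_pos (((2 * N + 1 : ℤ) : ℝ) * h)).ne'
  refine hs_cg (h2) (fun i => ?_) ?_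
  · rw [co_add_th hh _ _ (odd_ne i), show 2 * i + 1 + (2 * (N - i)) = 2 * N + 1 by ring,
      mul_left_comm (sc h _)]
    unfold sc; rw [inv_mul_cancel_left₀ hne]
  · ring

noncomputable def DD (h : ℝ) : ℝ := ∑' n : ℤ, sc h (2 * n)

lemma summable_sc_even {h : ℝ} (hh : 0 < h) : Summable fun n : ℤ => sc h (2 * n) := by
  simpa [Function.comp_def] using (summable_sc hh).comp_injective (inj_two 0)

lemma TT_pos {h : ℝ} (hh : 0 < h) (hD : DD h < 2) : 0 < TT h := by
  have h1 := conv_alt hh 0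
  have hs1 : 0 < Real.sinh h := Real.sinh_pos_iff.2 hh
  have h2 : HasSum (fun i : ℤ => (if i = 0 then 2 * (Real.sinh h)⁻¹ else 0) - (Real.sinh h)⁻¹ * sc h (2 * i))
      (2 * (Real.sinh h)⁻¹ - (Real.sinh h)⁻¹ * DD h) :=
    (hasSum_ite_eq (0 : ℤ) _).sub ((summable_sc_even hh).hasSum.mul_left _)
  have h3 := hasSum_le (fun i => ?_) h2 h1
  · have : 0 < 2 * (Real.sinh h)⁻¹ - (Real.sinh h)⁻¹ * DD h := by
      have : 0 < (Real.sinh h)⁻¹ := inv_pos.2 hs1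
      nlinarith
    have h4 := sc_pos h (2 * 0 + 1)
    exact pos_of_mul_pos_left (this.trans_le h3) h4.le
  · by_cases hi : i = 0
    · subst hi; simp [sc, cs]; linarith
    · simp only [hi, if_false, zero_sub]
      rw [show 2 * (-i) = -(2 * i) by ring, sc_neg]
      have h5 : |(-1 : ℝ) ^ i * (cs h (2 * i + 1) * sc h (2 * i))| ≤ (Real.sinh h)⁻¹ * sc h (2 * i) := by
        rw [abs_mul, abs_mul, abs_of_pos (sc_pos _ _)]
        have : |(-1 : ℝ) ^ i| = 1 := by rcases neg_one_zpow_sq i with h | h <;> rw [h] <;> simp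
        rw [this, one_mul]
        refine mul_le_mul_of_nonneg_right ?_ (sc_pos _ _).le
        unfold cs
        rw [abs_inv, Real.abs_sinh]
        refine inv_anti₀ hs1 ?_
        rw [Real.sinh_le_sinh, abs_mul, abs_of_pos hh]
        nlinarith [one_le_abs_int (odd_ne i)]
      exact (abs_le.1 h5).1

noncomputable def cC (h : ℝ) (n : ℤ) : ℂ := (sc h (2 * n + 1) : ℝ)
noncomputable def cS (h : ℝ) (n : ℤ) : ℂ := (cs h (2 * n + 1) : ℝ)
noncomputable def cD (h : ℝ) (n : ℤ) : ℂ := (sc h (2 * n) : ℝ)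
noncomputable def cP (h : ℝ) (n : ℤ) : ℂ := (sc h (2 * n + 1) : ℝ) / (Complex.I * (2 * n + 1 : ℤ))

lemma sum_cC {h : ℝ} (hh : 0 < h) : Summable fun n => ‖cC h n‖ := by
  simpa [cC, Function.comp_def] using (summable_sc_abs hh).comp_injective (inj_two 1)

lemma sum_cS {h : ℝ} (hh : 0 < h) : Summable fun n => ‖cS h n‖ := by
  simpa [cS, Function.comp_def] using (summable_cs hh).comp_injective (inj_two 1)

lemma sum_cD {h : ℝ} (hh : 0 < h) : Summable fun n => ‖cD h n‖ := by
  simpa [cD, Function.comp_def] using (summable_sc_abs hh).comp_injective (inj_two 0)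

lemma sum_cC' {h : ℝ} (hh : 0 < h) : Summable fun n => ‖((2 * n + 1 : ℤ) : ℂ) * cC h n‖ := by
  refine ((summable_abs_sc hh).comp_injective (inj_two 1)).congr fun n => ?_
  rw [norm_mul, cC, Complex.norm_real, Complex.norm_intCast, Real.norm_eq_abs,
    abs_of_pos (sc_pos _ _)]
  rfl

lemma sum_cS' {h : ℝ} (hh : 0 < h) : Summable fun n => ‖((2 * n + 1 : ℤ) : ℂ) * cS h n‖ := by
  refine ((summable_abs_cs hh).comp_injective (inj_two 1)).congr fun n => ?_
  rw [norm_mul, cS, Complex.norm_real, Complex.norm_intCast, Real.norm_eq_abs]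
  rfl

lemma sum_cD' {h : ℝ} (hh : 0 < h) : Summable fun n => ‖((2 * n + 0 : ℤ) : ℂ) * cD h n‖ := by
  refine ((summable_abs_sc hh).comp_injective (inj_two 0)).congr fun n => ?_
  rw [norm_mul, cD, Complex.norm_real, Complex.norm_intCast, Real.norm_eq_abs,
    abs_of_pos (sc_pos _ _)]
  simp

lemma odd_neC (n : ℤ) : ((2 * n + 1 : ℤ) : ℂ) ≠ 0 := by
  exact_mod_cast odd_ne n

lemma cP_mul (h : ℝ) (n : ℤ) : Complex.I * (((2 * n + 1 : ℤ) : ℂ) * cP h n) = cC h n := by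
  unfold cP cC
  have h1 := odd_neC n
  field_simp [Complex.I_ne_zero]

lemma sum_cP {h : ℝ} (hh : 0 < h) : Summable fun n => ‖cP h n‖ := by
  refine Summable.of_nonneg_of_le (fun _ => norm_nonneg _) (fun n => ?_) (sum_cC hh)
  unfold cP cC
  rw [norm_div, norm_mul, Complex.norm_I, one_mul, Complex.norm_intCast]
  exact div_le_self (norm_nonneg _) (one_le_abs_int (odd_ne n))

lemma sum_cP' {h : ℝ} (hh : 0 < h) : Summable fun n => ‖((2 * n + 1 : ℤ) : ℂ) * cP h n‖ := by
  refine (sum_cC hh).congr fun n => ?_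
  rw [← cP_mul, norm_mul, Complex.norm_I, one_mul]

lemma conv_real {a b : ℤ → ℝ} {N : ℤ} {v : ℝ} (hv : HasSum (fun i => a i * b (N - i)) v) :
    conv (fun n => (a n : ℂ)) (fun n => (b n : ℂ)) N = (v : ℂ) := by
  unfold conv
  have := (Complex.hasSum_ofReal.2 hv).tsum_eq
  simpa using this

lemma dP {h : ℝ} (hh : 0 < h) (t : ℝ) : HasDerivAt (Fs 1 (cP h)) (Fs 1 (cC h) t) t := by
  have := Fs_hasDeriv (p := 1) (sum_cP hh) (sum_cP' hh) t
  simpa only [cP_mul] using this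

lemma dS {h : ℝ} (hh : 0 < h) (t : ℝ) :
    HasDerivAt (Fs 1 (cS h)) (Complex.I * (Fs 1 (cC h) t * Fs 0 (cD h) t)) t := by
  have := Fs_hasDeriv (p := 1) (sum_cS hh) (sum_cS' hh) t
  rw [← Fs_smul] at this
  rw [Fs_mul (sum_cC hh) (sum_cD hh)]
  have e : conv (cC h) (cD h) = fun n => ((2 * n + 1 : ℤ) : ℂ) * cS h n := by
    ext N
    unfold cC cD cS
    rw [conv_real (by simpa using conv_sc_sc hh N)]
    push_cast; ring
  rw [e]
  exact this

lemma dC {h : ℝ} (hh : 0 < h) (t : ℝ) :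
    HasDerivAt (Fs 1 (cC h)) (Complex.I * (Fs 1 (cS h) t * Fs 0 (cD h) t)) t := by
  have := Fs_hasDeriv (p := 1) (sum_cC hh) (sum_cC' hh) t
  rw [← Fs_smul] at this
  rw [Fs_mul (sum_cS hh) (sum_cD hh)]
  have e : conv (cS h) (cD h) = fun n => ((2 * n + 1 : ℤ) : ℂ) * cC h n := by
    ext N
    unfold cC cD cS
    rw [conv_real (by simpa using conv_cs_sc hh 0 N)]
    push_cast; ring
  rw [e]
  exact this

lemma Fs_reindex (c : ℤ → ℂ) (t : ℝ) : Fs 2 (fun n => c (n + 1)) t = Fs 0 c t := by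
  unfold Fs
  rw [← (Equiv.addRight (1 : ℤ)).tsum_eq (fun n => c n * ex (2 * n + 0) t)]
  congr 1; ext n
  simp only [Equiv.coe_addRight]
  congr 2; ring

lemma dD {h : ℝ} (hh : 0 < h) (t : ℝ) :
    HasDerivAt (Fs 0 (cD h)) (Complex.I * (Fs 1 (cS h) t * Fs 1 (cC h) t)) t := by
  have := Fs_hasDeriv (p := 0) (sum_cD hh) (sum_cD' hh) t
  rw [← Fs_smul, ← Fs_reindex] at this
  rw [Fs_mul (sum_cS hh) (sum_cC hh)]
  have e : conv (cS h) (cC h) = fun n => ((2 * (n + 1) + 0 : ℤ) : ℂ) * cD h (n + 1) := by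
    ext N
    unfold cC cD cS
    rw [conv_real (a := fun i => cs h (2 * i + 1)) (b := fun i => sc h (2 * i + 1)) (conv_cs_sc hh 1 N)]
    rw [show 2 * N + 1 + 1 = 2 * (N + 1) by ring]
    push_cast; ring
  rw [e]
  exact this

lemma P_zero (h : ℝ) : Fs 1 (cP h) 0 = 0 := by
  have h1 := Fs_neg 1 (cP h) 0
  have h2 : (fun n => cP h (-1 - n)) = fun n => (-1) * cP h n := by
    ext n; unfold cP
    rw [show 2 * (-1 - n) + 1 = -(2 * n + 1) by ring, sc_neg]
    push_cast
    rw [mul_neg, div_neg]; ring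
  rw [h2, ← Fs_smul, neg_zero] at h1
  linear_combination h1 / 2

lemma S_zero (h : ℝ) : Fs 1 (cS h) 0 = 0 := by
  have h1 := Fs_neg 1 (cS h) 0
  have h2 : (fun n => cS h (-1 - n)) = fun n => (-1) * cS h n := by
    ext n; unfold cS
    rw [show 2 * (-1 - n) + 1 = -(2 * n + 1) by ring, cs_neg]
    push_cast; ring
  rw [h2, ← Fs_smul, neg_zero] at h1
  linear_combination h1 / 2

lemma D_zero (h : ℝ) : Fs 0 (cD h) 0 = (DD h : ℂ) := by
  unfold Fs cD DD
  rw [Complex.ofReal_tsum]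
  congr 1; ext n; simp [ex]

lemma P_real (h : ℝ) (t : ℝ) : (starRingEnd ℂ) (Fs 1 (cP h) t) = Fs 1 (cP h) t := by
  rw [Fs_conj]
  congr 1
  ext n
  unfold cP
  rw [show 2 * (-1 - n) + 1 = -(2 * n + 1) by ring, sc_neg, map_div₀, map_mul, Complex.conj_ofReal, Complex.conj_I, map_intCast]
  push_cast
  congr 1; ring

lemma ex_I_pow (n : ℤ) : ex (2 * n) (-(π / 2)) = (((-1 : ℝ) ^ n : ℝ) : ℂ) := by
  unfold ex
  have : (((2 * n : ℤ) : ℝ) * (-(π / 2)) : ℝ) * Complex.I = n * (-(π * Complex.I)) := by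
    push_cast; ring
  rw [this, Complex.exp_int_mul, Complex.exp_neg, Complex.exp_pi_mul_I]
  push_cast
  norm_num

lemma ex_one_half : ex 1 (π / 2) = Complex.I := by
  unfold ex
  have : ((((1 : ℤ) : ℝ) * (π / 2) : ℝ) : ℂ) * Complex.I = π / 2 * Complex.I := by push_cast; ring
  rw [this, Complex.exp_pi_div_two_mul_I]

lemma ex_odd_neg (n : ℤ) : ex (2 * n + 1) (-(π / 2)) = (-Complex.I) * (((-1 : ℝ) ^ n : ℝ) : ℂ) := by
  rw [ex_add, ex_I_pow]
  have : ex 1 (-(π / 2)) = -Complex.I := by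
    rw [ex_neg, ← ex_conj, ex_one_half, Complex.conj_I]
  rw [this]; ring

lemma ex_odd_pos (n : ℤ) : ex (2 * n + 1) (π / 2) = Complex.I * (((-1 : ℝ) ^ n : ℝ) : ℂ) := by
  have := ex_odd_neg n
  have h2 : ex (2 * n + 1) (π / 2) = (starRingEnd ℂ) (ex (2 * n + 1) (-(π / 2))) := by
    rw [ex_conj, ex_neg, neg_neg]
  rw [h2, this, map_mul, Complex.conj_ofReal, map_neg, Complex.conj_I, neg_neg]

lemma norm_alt (n : ℤ) (z : ℂ) : ‖(((-1 : ℝ) ^ n : ℝ) : ℂ) * z‖ = ‖z‖ := by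
  rcases neg_one_zpow_sq n with h | h <;> rw [h] <;> simp

lemma shift_id {h : ℝ} (hh : 0 < h) (t : ℝ) :
    Fs 1 (cS h) (t + -(π / 2)) * Fs 0 (cD h) t + Fs 0 (cD h) (t + -(π / 2)) * Fs 1 (cS h) t =
      -Complex.I * (TT h) * (Fs 1 (cC h) t + Fs 1 (cC h) (t + π / 2)) := by
  have hS : Fs 1 (cS h) (t + -(π / 2)) =
      -Complex.I * Fs 1 (fun n => (((-1 : ℝ) ^ n * cs h (2 * n + 1) : ℝ) : ℂ)) t := by
    rw [Fs_shift, Fs_smul]; congr 1; ext n; rw [ex_odd_neg]; unfold cS; push_cast; ring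
  have hD : Fs 0 (cD h) (t + -(π / 2)) =
      Fs 0 (fun n => (((-1 : ℝ) ^ n * sc h (2 * n) : ℝ) : ℂ)) t := by
    rw [Fs_shift]; congr 1; ext n; rw [add_zero, ex_I_pow]; unfold cD; push_cast; ring
  have sS : Summable fun n : ℤ => ‖(((-1 : ℝ) ^ n * cs h (2 * n + 1) : ℝ) : ℂ)‖ := by
    refine (sum_cS hh).congr fun n => ?_
    rw [Complex.ofReal_mul, norm_alt]; rfl
  have sD : Summable fun n : ℤ => ‖(((-1 : ℝ) ^ n * sc h (2 * n) : ℝ) : ℂ)‖ := by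
    refine (sum_cD hh).congr fun n => ?_
    rw [Complex.ofReal_mul, norm_alt]; rfl
  have sC2 : Summable fun n : ℤ => ‖cC h n * ex (2 * n + 1) (π / 2)‖ := by
    refine (sum_cC hh).congr fun n => ?_
    rw [norm_mul, ex_norm, mul_one]
  have p1 : Fs 1 (fun n => (((-1 : ℝ) ^ n * cs h (2 * n + 1) : ℝ) : ℂ)) t * Fs 0 (cD h) t =
      TT h * Fs 1 (cC h) t := by
    rw [Fs_mul sS (sum_cD hh), Fs_smul]
    congr 1
    ext N
    unfold cD cC
    rw [conv_real (v := TT h * sc h (2 * N + 1)) ?_]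
    · push_cast; ring
    · exact hs_cg (conv_alt hh N) (fun i => by ring) rfl
  have p2 : Fs 1 (cS h) t * Fs 0 (fun n => (((-1 : ℝ) ^ n * sc h (2 * n) : ℝ) : ℂ)) t =
      -Complex.I * TT h * Fs 1 (cC h) (t + π / 2) := by
    rw [Fs_shift, Fs_mul (sum_cS hh) sD, Fs_smul]
    congr 1
    ext N
    unfold cS cC
    rw [ex_odd_pos, conv_real (v := (-1) ^ N * (TT h * sc h (2 * N + 1))) ?_]
    · push_cast; linear_combination ((-1) ^ N * (TT h : ℂ) * (sc h (2 * N + 1) : ℂ)) * Complex.I_sq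
    · refine hs_cg ((conv_alt hh N).mul_left ((-1) ^ N)) (fun i => ?_) rfl
      have : (-1 : ℝ) ^ (N - i) = (-1) ^ N * (-1) ^ i := by
        rw [zpow_sub₀ (by norm_num)]
        rcases neg_one_zpow_sq i with h | h <;> rw [h] <;> ring
      rw [this]; ring
  rw [hS, hD]
  linear_combination (-Complex.I) * p1 + p2

lemma const_of {f : ℝ → ℂ} (hf : ∀ t, HasDerivAt f 0 t) (t : ℝ) : f t = f 0 :=
  is_const_of_deriv_eq_zero (fun t => (hf t).differentiableAt) (fun t => (hf t).deriv) t 0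

lemma plus_id {h : ℝ} (hh : 0 < h) (t : ℝ) :
    Fs 0 (cD h) t + Fs 1 (cS h) t = DD h * Complex.exp (Complex.I * Fs 1 (cP h) t) := by
  have := const_of (f := fun t => (Fs 0 (cD h) t + Fs 1 (cS h) t) * Complex.exp (-(Complex.I * Fs 1 (cP h) t)))
    (fun t => by
      have := (((dD hh t).add (dS hh t)).mul ((((dP hh t).const_mul Complex.I).neg).cexp))
      exact this.congr_deriv (by simp only [Pi.add_apply]; ring)) t
  simp only [P_zero, S_zero, D_zero, mul_zero, neg_zero, Complex.exp_zero, add_zero, mul_one] at this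
  rw [← this, mul_assoc, ← Complex.exp_add]
  simp

lemma minus_id {h : ℝ} (hh : 0 < h) (t : ℝ) :
    Fs 0 (cD h) t - Fs 1 (cS h) t = DD h * Complex.exp (-(Complex.I * Fs 1 (cP h) t)) := by
  have := const_of (f := fun t => (Fs 0 (cD h) t - Fs 1 (cS h) t) * Complex.exp (Complex.I * Fs 1 (cP h) t))
    (fun t => by
      have := (((dD hh t).sub (dS hh t)).mul ((((dP hh t).const_mul Complex.I)).cexp))
      exact this.congr_deriv (by simp only [Pi.sub_apply]; ring)) t
  simp only [P_zero, S_zero, D_zero, mul_zero, Complex.exp_zero, sub_zero, mul_one] at this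
  rw [← this, mul_assoc, ← Complex.exp_add]
  simp

lemma C_half {h : ℝ} (s : ℝ) (hs : s = π / 2 ∨ s = -(π / 2)) : Fs 1 (cC h) s = 0 := by
  have h0 : Fs 1 (cC h) (π / 2) = 0 := by
    have h1 := Fs_neg 1 (cC h) (π / 2)
    have h2 : (fun n => cC h (-1 - n)) = cC h := by
      ext n; unfold cC
      rw [show 2 * (-1 - n) + 1 = -(2 * n + 1) by ring, sc_neg]
    rw [h2] at h1
    have h3 : Fs 1 (cC h) (-(π / 2)) = - Fs 1 (cC h) (π / 2) := by
      unfold Fs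
      rw [← tsum_neg]
      congr 1; ext n; rw [ex_odd_neg, ex_odd_pos]; ring
    rw [h3] at h1
    linear_combination -h1 / 2
  rcases hs with rfl | rfl
  · exact h0
  · have h1 := Fs_neg 1 (cC h) (π / 2)
    have h2 : (fun n => cC h (-1 - n)) = cC h := by
      ext n; unfold cC
      rw [show 2 * (-1 - n) + 1 = -(2 * n + 1) by ring, sc_neg]
    rw [h1, h2, h0]

lemma C_zero_ne {h : ℝ} (hh : 0 < h) : Fs 1 (cC h) 0 ≠ 0 := by
  have hs := (summable_sc hh).comp_injective (inj_two 1)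
  have : Fs 1 (cC h) 0 = ((∑' n : ℤ, sc h (2 * n + 1) : ℝ) : ℂ) := by
    rw [Complex.ofReal_tsum]
    unfold Fs cC
    congr 1; ext n; simp [ex]
  rw [this]
  have h2 : 0 < ∑' n : ℤ, sc h (2 * n + 1) :=
    hs.tsum_pos (fun i => (sc_pos _ _).le) 0 (sc_pos _ _)
  exact_mod_cast h2.ne'

lemma DD_pos {h : ℝ} (hh : 0 < h) : 0 < DD h :=
  (summable_sc_even hh).tsum_pos (fun i => (sc_pos _ _).le) 0 (sc_pos _ _)

lemma TT_eq {h : ℝ} (hh : 0 < h) (hD : DD h < 2) : TT h = DD h := by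
  have h1 := shift_id hh 0
  rw [zero_add, zero_add, S_zero, D_zero, C_half _ (Or.inl rfl), mul_zero, add_zero, add_zero] at h1
  have h2 := const_of (f := fun t => Fs 1 (cC h) t * Fs 1 (cC h) t - Fs 1 (cS h) t * Fs 1 (cS h) t)
    (fun t => by
      have := ((dC hh t).mul (dC hh t)).sub ((dS hh t).mul (dS hh t))
      exact this.congr_deriv (by ring)) (-(π / 2))
  simp only [S_zero, C_half (h := h) _ (Or.inr rfl)] at h2
  have hne := C_zero_ne hh
  have h3 : ((TT h : ℂ)) ^ 2 = (DD h : ℂ) ^ 2 := by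
    apply mul_right_cancel₀ (pow_ne_zero 2 hne)
    generalize Fs 1 (cC h) 0 = c at *
    generalize Fs 1 (cS h) (-(π / 2)) = s at *
    linear_combination (s * DD h - Complex.I * TT h * c) * h1 + (DD h : ℂ) ^ 2 * h2 + (TT h : ℂ) ^ 2 * c ^ 2 * Complex.I_sq
  have h4 : TT h ^ 2 = DD h ^ 2 := by exact_mod_cast h3
  exact (sq_eq_sq₀ (TT_pos hh hD).le (DD_pos hh).le).1 h4

lemma core {h : ℝ} (hh : 0 < h) (hD : DD h < 2) :
    ∃ y : ℝ → ℝ, ContDiff ℝ 1 y ∧ Function.Periodic y (2 * π) ∧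
      (∀ t, deriv y t = -(DD h) * Real.sin (y (t - π / 2))) ∧
      ∀ φ : ℝ, ∫ t in (0 : ℝ)..(2 * π), (y (t + φ) : ℂ) * Complex.exp (-(Complex.I * t)) =
        2 * π * (sc h 1 * (1 - Complex.I) * Complex.exp (φ * Complex.I)) := by
  let X : ℝ → ℂ := fun t => Fs 1 (cP h) t + Fs 1 (cP h) (t + π / 2)
  have hXre : ∀ t, ((X t).re : ℂ) = X t := by
    intro t
    refine Complex.conj_eq_iff_re.1 ?_
    simp only [X, map_add, P_real]
  let X' : ℝ → ℂ := fun t => Fs 1 (cC h) t + Fs 1 (cC h) (t + π / 2)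
  have hX' : ∀ t, HasDerivAt X (X' t) t := by
    intro t
    exact (dP hh t).add ((dP hh (t + π / 2)).comp_add_const t (π / 2))
  have hX'c : Continuous X' := 
    (Fs_continuous (sum_cC hh)).add ((Fs_continuous (sum_cC hh)).comp (continuous_id.add continuous_const))
  have hy : ∀ t, HasDerivAt (fun t => (X t).re) ((X' t).re) t := fun t => by
    have := Complex.reCLM.hasFDerivAt.comp_hasDerivAt t (hX' t)
    exact this
  have hdde : ∀ t, X' t = -(DD h) * Complex.sin (X (t - π / 2)) := by
    intro t
    have e1 : X (t - π / 2) = Fs 1 (cP h) (t + -(π / 2)) + Fs 1 (cP h) t := by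
      simp only [X]; congr 2; ring
    have h1 := shift_id hh t
    rw [TT_eq hh hD] at h1
    have a1 := plus_id hh t
    have a2 := plus_id hh (t + -(π / 2))
    have b1 := minus_id hh t
    have b2 := minus_id hh (t + -(π / 2))
    rw [e1, Complex.sin]
    have c1 : Complex.exp (-(Fs 1 (cP h) (t + -(π / 2)) + Fs 1 (cP h) t) * Complex.I) =
        Complex.exp (-(Complex.I * Fs 1 (cP h) t)) * Complex.exp (-(Complex.I * Fs 1 (cP h) (t + -(π / 2)))) := by
      rw [← Complex.exp_add]; congr 1; ring
    have c2 : Complex.exp ((Fs 1 (cP h) (t + -(π / 2)) + Fs 1 (cP h) t) * Complex.I) =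
        Complex.exp ((Complex.I * Fs 1 (cP h) t)) * Complex.exp ((Complex.I * Fs 1 (cP h) (t + -(π / 2)))) := by
      rw [← Complex.exp_add]; congr 1; ring
    rw [c1, c2]
    have hne : (DD h : ℂ) ≠ 0 := by exact_mod_cast (DD_pos hh).ne'
    change Fs 1 (cC h) t + Fs 1 (cC h) (t + π / 2) = _
    generalize Complex.exp ((Complex.I * Fs 1 (cP h) t)) = E1 at *
    generalize Complex.exp ((Complex.I * Fs 1 (cP h) (t + -(π / 2)))) = E2 at *
    generalize Complex.exp (-(Complex.I * Fs 1 (cP h) t)) = G1 at *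
    generalize Complex.exp (-(Complex.I * Fs 1 (cP h) (t + -(π / 2)))) = G2 at *
    generalize Fs 1 (cC h) t + Fs 1 (cC h) (t + π / 2) = c at *
    have k1 : ((DD h : ℂ)) ^ 2 * (E1 * E2 - G1 * G2) = 2 * (-Complex.I * DD h * c) := by
      rw [← h1]
      have : ((DD h : ℂ)) ^ 2 * (E1 * E2 - G1 * G2) = (DD h * E1) * (DD h * E2) - (DD h * G1) * (DD h * G2) := by ring
      rw [this, ← a1, ← a2, ← b1, ← b2]; ring
    apply mul_left_cancel₀ hne
    linear_combination (-Complex.I / 2) * k1 + DD h * c * Complex.I_sq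
  refine ⟨fun t => (X t).re, ?_, ?_, ?_, ?_⟩
  · rw [contDiff_one_iff_deriv]
    refine ⟨fun t => (hy t).differentiableAt, ?_⟩
    rw [show deriv (fun t => (X t).re) = fun t => (X' t).re from funext fun t => (hy t).deriv]
    exact Complex.continuous_re.comp hX'c
  · intro t
    simp only [X]
    rw [show t + 2 * π + π / 2 = t + π / 2 + 2 * π by ring, Fs_periodic, Fs_periodic]
  · intro t
    rw [(hy t).deriv, hdde, ← hXre (t - π / 2), ← Complex.ofReal_sin, ← Complex.ofReal_neg,
      ← Complex.ofReal_mul, Complex.ofReal_re]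
  · intro φ
    have sP2 : Summable fun n : ℤ => ‖cP h n * ex (2 * n + 1) (π / 2)‖ := by
      refine (sum_cP hh).congr fun n => ?_
      rw [norm_mul, ex_norm, mul_one]
    have e1 : ∀ t : ℝ, (((X (t + φ)).re : ℝ) : ℂ) =
        Fs 1 (fun n => (cP h n + cP h n * ex (2 * n + 1) (π / 2)) * ex (2 * n + 1) φ) t := by
      intro t
      rw [hXre, ← Fs_shift, ← Fs_add (sum_cP hh) sP2, ← Fs_shift]
    simp_rw [e1]
    rw [Fs_coeff]
    · have h1 : cP h 0 = sc h 1 / Complex.I := by simp [cP]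
      have h2 : ex (2 * 0 + 1) φ = Complex.exp (φ * Complex.I) := by simp [ex]
      have h3 : ex (2 * 0 + 1) (π / 2) = Complex.I := by simpa using ex_one_half
      rw [h1, h2, h3, Complex.div_I]
      linear_combination (-2 * π * sc h 1 * Complex.exp (φ * Complex.I)) * Complex.I_sq
    · have : Summable fun n : ℤ => ‖cP h n‖ + ‖cP h n * ex (2 * n + 1) (π / 2)‖ := (sum_cP hh).add sP2
      refine Summable.of_nonneg_of_le (fun _ => norm_nonneg _) (fun n => ?_) this
      rw [norm_mul, ex_norm, mul_one]; exact norm_add_le _ _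

lemma DD_nat {h : ℝ} (hh : 0 < h) :
    Summable (fun n : ℕ => sc h (2 * ((n : ℤ) + 1))) ∧
    DD h = 1 + 2 * ∑' n : ℕ, sc h (2 * ((n : ℤ) + 1)) := by
  have hs := summable_sc_even hh
  have hi : Function.Injective fun n : ℕ => ((n : ℤ) + 1) := by
    intro a b hab; simp at hab; exact hab
  have hu : Summable (fun n : ℕ => sc h (2 * ((n : ℤ) + 1))) := hs.comp_injective hi
  refine ⟨hu, ?_⟩
  have h0 : Summable fun n : ℕ => sc h (2 * (n : ℤ)) := hs.comp_injective Nat.cast_injective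
  have h1 : HasSum (fun n : ℕ => sc h (2 * (-((n : ℤ) + 1)))) (∑' n : ℕ, sc h (2 * ((n : ℤ) + 1))) := by
    have : (fun n : ℕ => sc h (2 * (-((n : ℤ) + 1)))) = fun n : ℕ => sc h (2 * ((n : ℤ) + 1)) := by
      ext n; rw [← sc_neg]; congr 1; try ring
    rw [this]; exact hu.hasSum
  have h2 := HasSum.of_nat_of_neg_add_one (f := fun n : ℤ => sc h (2 * n)) h0.hasSum h1
  unfold DD
  rw [h2.tsum_eq, h0.tsum_eq_zero_add]
  have : sc h (2 * ((0 : ℕ) : ℤ)) = 1 := by simp [sc]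
  rw [this]
  push_cast
  ring

lemma cosh_vals {h c : ℝ} (hc : Real.cosh h = c) :
    sc h 2 = (2 * c ^ 2 - 1)⁻¹ ∧ sc h 4 = (2 * (2 * c ^ 2 - 1) ^ 2 - 1)⁻¹ ∧
      sc h 6 = (4 * (2 * c ^ 2 - 1) ^ 3 - 3 * (2 * c ^ 2 - 1))⁻¹ := by
  have h1 : Real.cosh (2 * h) = 2 * c ^ 2 - 1 := by
    rw [Real.cosh_two_mul, Real.sinh_sq, hc]; ring
  refine ⟨?_, ?_, ?_⟩
  · unfold sc; push_cast; rw [h1]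
  · unfold sc; push_cast; rw [show (4 : ℝ) * h = 2 * (2 * h) by ring, Real.cosh_two_mul, Real.sinh_sq, h1]
    congr 1; ring
  · unfold sc; push_cast; rw [show (6 : ℝ) * h = 3 * (2 * h) by ring, Real.cosh_three_mul, h1]

lemma DD_lower {h c : ℝ} (hh : 0 < h) (hc : Real.cosh h = c) :
    1 + 2 * ((2 * c ^ 2 - 1)⁻¹ + (2 * (2 * c ^ 2 - 1) ^ 2 - 1)⁻¹ +
      (4 * (2 * c ^ 2 - 1) ^ 3 - 3 * (2 * c ^ 2 - 1))⁻¹) ≤ DD h := by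
  obtain ⟨hu, hD⟩ := DD_nat hh
  obtain ⟨v1, v2, v3⟩ := cosh_vals hc
  have := hu.sum_le_tsum (Finset.range 3) (fun n _ => (sc_pos _ _).le)
  simp only [Finset.sum_range_succ, Finset.sum_range_zero] at this
  norm_num at this
  rw [v1, v2, v3] at this
  rw [hD]; linarith

lemma DD_upper {h c : ℝ} (hh : 0 < h) (hc : Real.cosh h = c) :
    DD h ≤ 1 + 2 * ((2 * c ^ 2 - 1)⁻¹ + (2 * (2 * c ^ 2 - 1) ^ 2 - 1)⁻¹ +
      (4 * (2 * c ^ 2 - 1) ^ 3 - 3 * (2 * c ^ 2 - 1))⁻¹ * (1 - (2 * c ^ 2 - 1)⁻¹)⁻¹) := by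
  obtain ⟨hu, hD⟩ := DD_nat hh
  obtain ⟨v1, v2, v3⟩ := cosh_vals hc
  have hc1 : 1 < c := by rw [← hc]; exact Real.one_lt_cosh.2 hh.ne'
  have hx : 1 < 2 * c ^ 2 - 1 := by nlinarith
  rw [hD, ← hu.sum_add_tsum_nat_add 2]
  simp only [Finset.sum_range_succ, Finset.sum_range_zero]
  have w1 : sc h (2 * (((0 : ℕ) : ℤ) + 1)) = (2 * c ^ 2 - 1)⁻¹ := by rw [← v1]; norm_num
  have w2 : sc h (2 * (((1 : ℕ) : ℤ) + 1)) = (2 * (2 * c ^ 2 - 1) ^ 2 - 1)⁻¹ := by rw [← v2]; norm_num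
  rw [w1, w2]
  have hr : (2 * c ^ 2 - 1)⁻¹ < 1 := inv_lt_one_of_one_lt₀ hx
  have hr0 : 0 ≤ (2 * c ^ 2 - 1)⁻¹ := by positivity
  have hg := (hasSum_geometric_of_lt_one hr0 hr).mul_left (sc h 6)
  have hle : ∀ n : ℕ, sc h (2 * (((n + 2 : ℕ) : ℤ) + 1)) ≤ sc h 6 * ((2 * c ^ 2 - 1)⁻¹) ^ n := by
    intro n
    induction n with
    | zero => norm_num
    | succ n ih =>
      have step : sc h (2 * (((n + 1 + 2 : ℕ) : ℤ) + 1)) ≤ sc h (2 * (((n + 2 : ℕ) : ℤ) + 1)) * sc h 2 := by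
        unfold sc
        rw [← mul_inv]
        refine inv_anti₀ (mul_pos (Real.cosh_pos _) (Real.cosh_pos _)) ?_
        have e : (((2 * (((n + 1 + 2 : ℕ) : ℤ) + 1) : ℤ)) : ℝ) * h =
          ((2 * (((n + 2 : ℕ) : ℤ) + 1) : ℤ) : ℝ) * h + ((2 : ℤ) : ℝ) * h := by push_cast; ring
        rw [e, Real.cosh_add]
        have s1 : 0 ≤ Real.sinh (((2 * (((n + 2 : ℕ) : ℤ) + 1) : ℤ) : ℝ) * h) :=
          Real.sinh_nonneg_iff.2 (by push_cast; positivity)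
        have s2 : 0 ≤ Real.sinh (((2 : ℤ) : ℝ) * h) := Real.sinh_nonneg_iff.2 (by push_cast; positivity)
        nlinarith
      rw [v1] at step
      calc _ ≤ _ := step
        _ ≤ (sc h 6 * ((2 * c ^ 2 - 1)⁻¹) ^ n) * (2 * c ^ 2 - 1)⁻¹ := mul_le_mul_of_nonneg_right ih hr0
        _ = _ := by ring
  have ht : ∑' i : ℕ, sc h (2 * (((i + 2 : ℕ) : ℤ) + 1)) ≤ sc h 6 * (1 - (2 * c ^ 2 - 1)⁻¹)⁻¹ := by
    have := (hasSum_le hle ((summable_nat_add_iff 2).2 hu).hasSum hg)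
    exact this
  rw [v3] at ht
  linarith

lemma exists_h : ∃ h : ℝ, 0 < h ∧ DD h = 3.2 / π ∧
    (7.384969 : ℝ)⁻¹ ≤ sc h 1 ∧ sc h 1 ≤ (7.384952 : ℝ)⁻¹ := by
  have hc1 := Real.cosh_arcosh (x := 7.384952) (by norm_num)
  have hc2 := Real.cosh_arcosh (x := 7.384969) (by norm_num)
  have hp1 := Real.arcosh_pos (x := 7.384952) (by norm_num)
  have hp2 := Real.arcosh_pos (x := 7.384969) (by norm_num)
  set a := Real.arcosh 7.384952
  set b := Real.arcosh 7.384969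
  have hab : a ≤ b := by
    have : Real.cosh a ≤ Real.cosh b := by rw [hc1, hc2]; norm_num
    rwa [Real.cosh_le_cosh, abs_of_pos hp1, abs_of_pos hp2] at this
  have hcont : ContinuousOn DD (Set.Icc a b) := by
    unfold DD
    refine continuousOn_tsum (u := fun n => sc a (2 * n)) (fun n => ?_) (summable_sc_even hp1) ?_
    · unfold sc
      refine Continuous.continuousOn ?_
      exact (Real.continuous_cosh.comp (continuous_const.mul continuous_id)).inv₀ fun x => (Real.cosh_pos _).ne'
    · intro n x hx
      rw [Real.norm_eq_abs, abs_of_pos (sc_pos _ _)]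
      unfold sc
      refine inv_anti₀ (Real.cosh_pos _) ?_
      rw [Real.cosh_le_cosh, abs_mul, abs_mul, abs_of_pos hp1, abs_of_pos (hp1.trans_le hx.1)]
      exact mul_le_mul_of_nonneg_left hx.1 (abs_nonneg _)
  have p1 := Real.pi_gt_d20
  have p2 := Real.pi_lt_d20
  have hl : 3.2 / π ≤ DD a := by
    refine le_trans ?_ (DD_lower hp1 hc1)
    calc 3.2 / π ≤ 3.2 / 3.14159265358979323846 := by gcongr
      _ ≤ _ := by norm_num
  have hu : DD b ≤ 3.2 / π := by
    refine (DD_upper hp2 hc2).trans ?_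
    calc _ ≤ 3.2 / 3.14159265358979323847 := by norm_num
      _ ≤ 3.2 / π := by gcongr
  obtain ⟨h, hm, hD⟩ := intermediate_value_Icc' hab hcont ⟨hu, hl⟩
  have hp : 0 < h := hp1.trans_le hm.1
  refine ⟨h, hp, hD, ?_, ?_⟩
  · unfold sc
    rw [Int.cast_one, one_mul]
    refine inv_anti₀ (Real.cosh_pos _) ?_
    rw [← hc2, Real.cosh_le_cosh, abs_of_pos hp, abs_of_pos hp2]; exact hm.2
  · unfold sc
    rw [Int.cast_one, one_mul]
    refine inv_anti₀ (by norm_num) ?_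
    rw [← hc1, Real.cosh_le_cosh, abs_of_pos hp, abs_of_pos hp1]; exact hm.1

/-- main theorem, rescaled form: existence of a nontrivial `2π`-periodic `C¹`
solution of `x'(t) = -(1.6/τ) sin(x(t-τ))` for some `τ` within `10⁻⁶` of `1.570796`, whose
first Fourier coefficient is within `2.438·10⁻⁷` of `-0.1521 - 0.1163508047 i`. -/
theorem main_periodic_orbit :
    ∃ τ : ℝ, |τ - 1.570796| ≤ 0.000001 ∧
      ∃ x : ℝ → ℝ, ContDiff ℝ 1 x ∧ Function.Periodic x (2 * π) ∧
        (∀ t : ℝ, deriv x t = -(1.6 / τ) * Real.sin (x (t - τ))) ∧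
        ‖((1 / (2 * π) : ℝ) : ℂ) *
            (∫ t in (0 : ℝ)..(2 * π), (x t : ℂ) * Complex.exp (-(Complex.I * t))) -
          (-0.1521 - 0.1163508047 * Complex.I)‖ ≤ 0.0000002438 ∧
        ∃ t₁ t₂ : ℝ, x t₁ ≠ x t₂ := by
  obtain ⟨h, hh, hD, hl, hu⟩ := exists_h
  have p1 := Real.pi_gt_d20
  have p2 := Real.pi_lt_d20
  have hD2 : DD h < 2 := by
    rw [hD, div_lt_iff₀ Real.pi_pos]; linarith
  obtain ⟨y, hy1, hy2, hy3, hy4⟩ := core hh hD2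
  set w : ℂ := -0.1521 - 0.1163508047 * Complex.I with hw
  have hI : (1 - Complex.I : ℂ) ≠ 0 := by
    intro h0
    have := congrArg Complex.re h0
    simp at this
  set v : ℂ := w / (1 - Complex.I) with hv
  have hwv : w = (1 - Complex.I) * v := by rw [hv]; field_simp
  have hexp : (‖v‖ : ℂ) * Complex.exp (Complex.arg v * Complex.I) = v := Complex.norm_mul_exp_arg_mul_I v
  have hvn : ‖v‖ ^ 2 = (0.1521 ^ 2 + 0.1163508047 ^ 2) / 2 := by
    have e1 : Complex.normSq w = 0.1521 ^ 2 + 0.1163508047 ^ 2 := by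
      rw [show w = ((-0.1521 : ℝ) : ℂ) + ((-0.1163508047 : ℝ) : ℂ) * Complex.I by rw [hw]; push_cast; ring,
        Complex.normSq_add_mul_I]
      norm_num
    have e2 : Complex.normSq (1 - Complex.I) = 2 := by
      rw [show (1 - Complex.I : ℂ) = ((1 : ℝ) : ℂ) + ((-1 : ℝ) : ℂ) * Complex.I by push_cast; ring,
        Complex.normSq_add_mul_I]
      norm_num
    rw [← Complex.normSq_eq_norm_sq, hv, Complex.normSq_div, e1, e2]
  set ρ := ‖v‖ with hρ
  have hρ0 : 0 ≤ ρ := norm_nonneg v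
  have hρ1 : 0.13541033 ≤ ρ := by
    by_contra! hlt
    nlinarith
  have hρ2 : ρ ≤ 0.13541035 := by
    by_contra! hlt
    nlinarith
  have hdiff : |sc h 1 - ρ| ≤ 0.00000017238 := by
    rw [abs_le]
    norm_num at hl hu
    constructor <;> linarith
  have hnI : ‖(1 - Complex.I : ℂ)‖ ≤ 1.41422 := by
    have e2 : ‖(1 - Complex.I : ℂ)‖ ^ 2 = 2 := by
      rw [← Complex.normSq_eq_norm_sq, show (1 - Complex.I : ℂ) = ((1 : ℝ) : ℂ) + ((-1 : ℝ) : ℂ) * Complex.I by push_cast; ring,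
        Complex.normSq_add_mul_I]
      norm_num
    by_contra! hlt
    nlinarith
  have hcoef := hy4 (Complex.arg v)
  have hpi : (π : ℂ) ≠ 0 := by exact_mod_cast Real.pi_ne_zero
  have hest : ‖((1 / (2 * π) : ℝ) : ℂ) *
            (∫ t in (0 : ℝ)..(2 * π), (y (t + Complex.arg v) : ℂ) * Complex.exp (-(Complex.I * t))) - w‖ ≤ 0.0000002438 := by
    rw [hcoef]
    have hwv' : w = (1 - Complex.I) * (ρ * Complex.exp (Complex.arg v * Complex.I)) :=
      hwv.trans (by rw [hexp])
    have : ((1 / (2 * π) : ℝ) : ℂ) * (2 * π * (sc h 1 * (1 - Complex.I) * Complex.exp (Complex.arg v * Complex.I))) - w =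
        (1 - Complex.I) * ((sc h 1 - ρ : ℝ) : ℂ) * Complex.exp (Complex.arg v * Complex.I) := by
      have hpi : (π : ℂ) ≠ 0 := by exact_mod_cast Real.pi_ne_zero
      have key : ∀ E : ℂ, ((1 / (2 * π) : ℝ) : ℂ) * (2 * π * (sc h 1 * (1 - Complex.I) * E)) -
          (1 - Complex.I) * (ρ * E) = (1 - Complex.I) * ((sc h 1 - ρ : ℝ) : ℂ) * E := by
        intro E
        push_cast
        field_simp
      exact (congrArg _ hwv').trans (key _)
    rw [this, norm_mul, norm_mul, Complex.norm_exp_ofReal_mul_I, mul_one, Complex.norm_real, Real.norm_eq_abs]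
    calc _ ≤ (1.41422 : ℝ) * 0.00000017238 := mul_le_mul hnI hdiff (abs_nonneg _) (by norm_num)
      _ ≤ _ := by norm_num
  refine ⟨π / 2, ?_, fun t => y (t + Complex.arg v), ?_, ?_, ?_, hest, ?_⟩
  · rw [abs_le]; constructor <;> linarith
  · exact hy1.comp (contDiff_id.add contDiff_const)
  · intro t
    simp only
    rw [show t + 2 * π + Complex.arg v = t + Complex.arg v + 2 * π by ring, hy2]
  · intro t
    rw [deriv_comp_add_const, hy3, hD]
    rw [show t + Complex.arg v - π / 2 = t - π / 2 + Complex.arg v by ring]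
    congr 2
    field_simp
    norm_num
  · by_contra! hcon
    have h0 : ∀ t : ℝ, y (t + Complex.arg v) = y (0 + Complex.arg v) := fun t => hcon t 0
    simp_rw [h0] at hest
    rw [intervalIntegral.integral_const_mul] at hest
    have e0 := ex_integral (-1)
    have e1 : ∀ t : ℝ, ex (-1) t = Complex.exp (-(Complex.I * t)) := by
      intro t; unfold ex; congr 1; push_cast; ring
    simp_rw [e1] at e0
    rw [e0] at hest
    simp only [show ¬ ((-1 : ℤ) = 0) by norm_num, if_false, mul_zero, zero_sub, norm_neg] at hest
    have e2 := Complex.abs_re_le_norm w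
    have e3 : w.re = -0.1521 := by
      rw [show w = ((-0.1521 : ℝ) : ℂ) + ((-0.1163508047 : ℝ) : ℂ) * Complex.I by rw [hw]; push_cast; ring]
      simp
    rw [e3] at e2
    norm_num at e2 hest
    linarith
end

section
/- There exists a nonconstant periodic C¹ function y : ℝ → ℝ satisfying y'(t) = -1.6·sin(y(t-1)) for all t ∈ ℝ, with period T = 2π/τ for some real number τ with |τ - 1.570796| ≤ 0.000001. -/
open scoped Real
open Complex Filter

noncomputable def gE (m φ : ℝ) : ℝ := √(max (1/2) (1 - m * Real.sin φ ^ 2))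

lemma gE_cont : Continuous (Function.uncurry gE) := by
  unfold gE Function.uncurry
  fun_prop

lemma gE_pos (m φ : ℝ) : 0 < gE m φ := by
  unfold gE
  exact Real.sqrt_pos.2 (lt_of_lt_of_le (by norm_num) (le_max_left _ _))

lemma gE_eq {m : ℝ} (h0 : 0 ≤ m) (h1 : m ≤ 1/2) (φ : ℝ) : gE m φ = √(1 - m * Real.sin φ ^ 2) := by
  unfold gE
  rw [max_eq_right]
  nlinarith [Real.sin_sq_le_one φ, sq_nonneg (Real.sin φ)]

lemma gE_inv_cont : Continuous (Function.uncurry fun m φ => (gE m φ)⁻¹) :=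
  gE_cont.inv₀ (fun x => (gE_pos x.1 x.2).ne')

lemma gE_inv_cont1 (m : ℝ) : Continuous (fun φ => (gE m φ)⁻¹) :=
  gE_inv_cont.comp (Continuous.prodMk continuous_const continuous_id)

lemma exists_m : ∃ m : ℝ, 0 < m ∧ m ≤ 1/2 ∧ ∫ φ in (0:ℝ)..(π/2), (gE m φ)⁻¹ = 1.6 := by
  have hc : Continuous fun m => ∫ φ in (0:ℝ)..(π/2), (gE m φ)⁻¹ :=
    intervalIntegral.continuous_parametric_intervalIntegral_of_continuous' gE_inv_cont _ _
  have h0 : ∫ φ in (0:ℝ)..(π/2), (gE 0 φ)⁻¹ = π/2 := by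
    have : ∀ φ, (gE 0 φ)⁻¹ = 1 := by
      intro φ
      rw [gE_eq le_rfl (by norm_num)]; simp
    simp [this]
  have h1 : 1.6 ≤ ∫ φ in (0:ℝ)..(π/2), (gE (1/2) φ)⁻¹ := by
    have h2 : ∫ φ in (0:ℝ)..(π/2), (1 + 1/4 * Real.sin φ ^ 2) = π/2 + 1/4 * (π/4) := by
      rw [intervalIntegral.integral_add (by simp) (by
        apply Continuous.intervalIntegrable; fun_prop), intervalIntegral.integral_const_mul,
        integral_sin_sq]
      simp; ring
    have h3 : ∫ φ in (0:ℝ)..(π/2), (1 + 1/4 * Real.sin φ ^ 2) ≤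
        ∫ φ in (0:ℝ)..(π/2), (gE (1/2) φ)⁻¹ := by
      apply intervalIntegral.integral_mono_on (by positivity)
      · apply Continuous.intervalIntegrable; fun_prop
      · exact (gE_inv_cont1 _).intervalIntegrable _ _
      · intro φ _
        rw [← one_div, le_div_iff₀ (gE_pos _ _)]
        have hs : gE (1/2) φ ≤ 1 - 1/4 * Real.sin φ ^ 2 := by
          rw [gE_eq (by norm_num) le_rfl]
          have := Real.sin_sq_le_one φ
          apply Real.sqrt_le_iff.2
          constructor
          · linarith
          · nlinarith [sq_nonneg (Real.sin φ ^ 2)]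
        nlinarith [sq_nonneg (Real.sin φ ^ 2), sq_nonneg (Real.sin φ)]
    rw [h2] at h3
    linarith [Real.pi_gt_d6]
  have := intermediate_value_Icc (by norm_num : (0:ℝ) ≤ 1/2) hc.continuousOn
  obtain ⟨m, hm, he⟩ := this (show (1.6:ℝ) ∈ _ from ⟨by
    simp only [h0]; linarith [Real.pi_lt_d6], h1⟩)
  refine ⟨m, lt_of_le_of_ne hm.1 ?_, hm.2, he⟩
  rintro rfl
  simp only [h0] at he
  linarith [Real.pi_lt_d6]

lemma exists_theta : ∃ m : ℝ, 0 < m ∧ m ≤ 1/2 ∧ ∃ θ : ℝ → ℝ, θ 0 = 0 ∧ θ 1 = π/2 ∧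
    ∀ t, HasDerivAt θ (1.6 * √(1 - m * Real.sin (θ t) ^ 2)) t := by
  obtain ⟨m, h0, h1, hm⟩ := exists_m
  refine ⟨m, h0, h1, ?_⟩
  set F : ℝ → ℝ := fun x => ∫ φ in (0:ℝ)..x, (gE m φ)⁻¹ with hF
  have hd : ∀ x, HasDerivAt F (gE m x)⁻¹ x := fun x =>
    (gE_inv_cont1 m).integral_hasStrictDerivAt 0 x |>.hasDerivAt
  have hge : ∀ x, 1 ≤ (gE m x)⁻¹ := by
    intro x
    apply (one_le_inv₀ (gE_pos m x)).2
    rw [gE_eq h0.le h1]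
    apply Real.sqrt_le_one.2
    nlinarith [sq_nonneg (Real.sin x)]
  have hcont : Continuous F := continuous_iff_continuousAt.2 fun x => (hd x).continuousAt
  have hmono : StrictMono F := strictMono_of_hasDerivAt_pos hd
    (fun x => inv_pos.2 (gE_pos m x))
  have hF0 : F 0 = 0 := by simp [hF]
  have hmono2 : Monotone fun x => F x - x := by
    apply monotone_of_hasDerivAt_nonneg (f' := fun x => (gE m x)⁻¹ - 1)
    · intro x
      exact (hd x).sub (hasDerivAt_id x)
    · intro x
      simpa using hge x
  have hsurj : Function.Surjective F := by
    apply hcont.surjective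
    · apply Filter.tendsto_atTop_mono' _ _ tendsto_id
      filter_upwards [eventually_ge_atTop 0] with x hx
      have := hmono2 hx
      simp [hF0] at this
      simpa using this
    · apply Filter.tendsto_atBot_mono' _ _ tendsto_id
      filter_upwards [eventually_le_atBot 0] with x hx
      have := hmono2 hx
      simp [hF0] at this
      simpa using this
  let e := StrictMono.orderIsoOfSurjective F hmono hsurj
  have he : ∀ x, e x = F x := fun x => rfl
  have hes : ∀ x, F (e.symm x) = x := fun x => e.apply_symm_apply x
  have hec : Continuous e.symm := e.symm.continuous
  have hdi : ∀ x, HasDerivAt e.symm (gE m (e.symm x)) x := by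
    intro x
    have := HasDerivAt.of_local_left_inverse (f := F) (g := e.symm) hec.continuousAt (hd (e.symm x))
      (inv_pos.2 (gE_pos m _)).ne' (Filter.Eventually.of_forall hes)
    simpa using this
  refine ⟨fun t => e.symm (1.6 * t), ?_, ?_, ?_⟩
  · simp only [mul_zero]
    rw [OrderIso.symm_apply_eq, he, hF0]
  · simp only [mul_one]
    rw [OrderIso.symm_apply_eq, he]
    exact hm.symm
  · intro t
    have := (hdi (1.6 * t)).comp t ((hasDerivAt_id t).const_mul (1.6:ℝ))
    rw [gE_eq h0.le h1] at this
    refine HasDerivAt.congr_deriv this (Eq.symm ?_)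
    ring

lemma exists_uv : ∃ u v : ℝ → ℝ, u 0 = 0 ∧ 0 < v 0 ∧ u 1 = v 0 ∧ v 1 = 0 ∧
    (∀ t, HasDerivAt u (1.6 * (Real.cos (u t) * Real.sin (v t))) t) ∧
    (∀ t, HasDerivAt v (-1.6 * (Real.sin (u t) * Real.cos (v t))) t) := by
  obtain ⟨m, h0, h1, θ, hθ0, hθ1, hθ⟩ := exists_theta
  obtain ⟨q, hq, rfl⟩ : ∃ q : ℝ, 0 < q ∧ m = q ^ 2 := ⟨√m, Real.sqrt_pos.2 h0, (Real.sq_sqrt h0.le).symm⟩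
  have hq1 : q < 1 := by nlinarith
  set D : ℝ → ℝ := fun t => √(1 - q ^ 2 * Real.sin (θ t) ^ 2) with hD
  have hpos : ∀ t, 0 < 1 - q ^ 2 * Real.sin (θ t) ^ 2 := fun t => by
    nlinarith [Real.sin_sq_le_one (θ t), sq_nonneg (Real.sin (θ t))]
  have hDpos : ∀ t, 0 < D t := fun t => Real.sqrt_pos.2 (hpos t)
  have hDsq : ∀ t, D t ^ 2 = 1 - q ^ 2 * Real.sin (θ t) ^ 2 := fun t => Real.sq_sqrt (hpos t).le
  have hS : ∀ t, HasDerivAt (fun t => Real.sin (θ t)) (Real.cos (θ t) * (1.6 * D t)) t :=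
    fun t => (hθ t).sin
  have hC : ∀ t, HasDerivAt (fun t => Real.cos (θ t)) (-Real.sin (θ t) * (1.6 * D t)) t :=
    fun t => (hθ t).cos
  have hDd : ∀ t, HasDerivAt D (-1.6 * q ^ 2 * Real.sin (θ t) * Real.cos (θ t)) t := by
    intro t
    have := ((((hS t).pow 2).const_mul (q ^ 2)).const_sub 1).sqrt (hpos t).ne'
    refine HasDerivAt.congr_deriv this (Eq.symm ?_)
    have h := (hDpos t).ne'
    change _ = _ / (2 * D t)
    field_simp
    simp
    ring
  set p : ℝ := √(1 - q ^ 2) with hp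
  have hp0 : 0 < p := Real.sqrt_pos.2 (by nlinarith)
  have hpsq : p ^ 2 = 1 - q ^ 2 := Real.sq_sqrt (by nlinarith)
  have key : ∀ t, 1 - (q * Real.cos (θ t) / D t) ^ 2 = (p / D t) ^ 2 := by
    intro t
    have h := (hDpos t).ne'
    field_simp
    rw [hDsq, hpsq, Real.cos_sq']
    ring
  have hcos1 : ∀ t, Real.cos (Real.arcsin (q * Real.sin (θ t))) = D t := by
    intro t
    rw [Real.cos_arcsin, mul_pow]
  have hcos2 : ∀ t, Real.cos (Real.arcsin (q * Real.cos (θ t) / D t)) = p / D t := by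
    intro t
    rw [Real.cos_arcsin, key, Real.sqrt_sq (div_pos hp0 (hDpos t)).le]
  have hb1 : ∀ t, -1 < q * Real.sin (θ t) ∧ q * Real.sin (θ t) < 1 := by
    intro t
    apply abs_lt.1
    apply (sq_lt_one_iff_abs_lt_one _).1
    have := hpos t
    nlinarith
  have hb2 : ∀ t, -1 < q * Real.cos (θ t) / D t ∧ q * Real.cos (θ t) / D t < 1 := by
    intro t
    apply abs_lt.1
    apply (sq_lt_one_iff_abs_lt_one _).1
    have := key t
    have h2 : 0 < (p / D t) ^ 2 := pow_pos (div_pos hp0 (hDpos t)) 2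
    linarith
  refine ⟨fun t => Real.arcsin (q * Real.sin (θ t)), fun t => Real.arcsin (q * Real.cos (θ t) / D t),
    ?_, ?_, ?_, ?_, ?_, ?_⟩
  · simp [hθ0]
  · simp [hθ0, hD, hq]
  · simp [hθ0, hθ1, hD]
  · simp [hθ1]
  · intro t
    have := (Real.hasDerivAt_arcsin (hb1 t).1.ne' (hb1 t).2.ne).comp t ((hS t).const_mul q)
    refine HasDerivAt.congr_deriv this (Eq.symm ?_)
    rw [← Real.cos_arcsin, hcos1, Real.sin_arcsin (hb2 t).1.le (hb2 t).2.le]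
    have h := (hDpos t).ne'
    field_simp
  · intro t
    have := (Real.hasDerivAt_arcsin (hb2 t).1.ne' (hb2 t).2.ne).comp t
      (((hC t).const_mul q).div (hDd t) (hDpos t).ne')
    refine HasDerivAt.congr_deriv this (Eq.symm ?_)
    rw [← Real.cos_arcsin, hcos2, Real.sin_arcsin (hb1 t).1.le (hb1 t).2.le]
    have h := (hDpos t).ne'
    have h2 := hDsq t
    have h3 := Real.sin_sq_add_cos_sq (θ t)
    have h4 : D t ^ 2 - q ^ 2 * Real.cos (θ t) ^ 2 = p ^ 2 := by
      rw [h2, hpsq, Real.cos_sq']; ring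
    field_simp
    rw [← h4]
    ring

lemma lip_field : LipschitzWith 2
    (fun w : ℝ × ℝ => ((-1.6 * Real.sin w.2, 1.6 * Real.sin w.1) : ℝ × ℝ)) := by
  apply LipschitzWith.of_dist_le_mul
  intro a b
  have hs : ∀ x y : ℝ, |Real.sin x - Real.sin y| ≤ |x - y| := fun x y => by
    have := Real.abs_sin_sub_sin_le x y
    exact this
  have e1 : |a.1 - b.1| ≤ dist a b := by
    rw [Prod.dist_eq, Real.dist_eq]; exact le_max_left _ _
  have e2 : |a.2 - b.2| ≤ dist a b := by
    rw [Prod.dist_eq, Real.dist_eq, Real.dist_eq]; exact le_max_right _ _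
  have hd : 0 ≤ dist a b := dist_nonneg
  rw [Prod.dist_eq]
  simp only [Real.dist_eq, ← mul_sub, abs_mul]
  norm_num
  constructor
  · have := hs a.2 b.2
    linarith
  · have := hs a.1 b.1
    linarith

/-- main theorem, original equation: a nonconstant periodic `C¹` solution of
`y'(t) = -1.6 sin(y(t-1))` with period `2π/τ`, `|τ - 1.570796| ≤ 10⁻⁶`. -/
theorem main_periodic_orbit_original :
    ∃ τ : ℝ, |τ - 1.570796| ≤ 0.000001 ∧
      ∃ y : ℝ → ℝ, ContDiff ℝ 1 y ∧ Function.Periodic y (2 * π / τ) ∧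
        (∀ t : ℝ, deriv y t = -1.6 * Real.sin (y (t - 1))) ∧
        ∃ t₁ t₂ : ℝ, y t₁ ≠ y t₂ := by
  obtain ⟨u, v, hu0, hv0, hu1, hv1, hu, hv⟩ := exists_uv
  set x : ℝ → ℝ := fun t => u t + v t with hx
  set z : ℝ → ℝ := fun t => u t - v t with hz
  have hxd : ∀ t, HasDerivAt x (-1.6 * Real.sin (z t)) t := by
    intro t
    refine HasDerivAt.congr_deriv ((hu t).add (hv t)) (Eq.symm ?_)
    simp only [hz, Real.sin_sub]; ring
  have hzd : ∀ t, HasDerivAt z (1.6 * Real.sin (x t)) t := by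
    intro t
    refine HasDerivAt.congr_deriv ((hu t).sub (hv t)) (Eq.symm ?_)
    simp only [hx, Real.sin_add]; ring
  have huniq : (fun t => (x (t + 1), z (t + 1))) = fun t => (-z t, x t) := by
    apply ODE_solution_unique_univ (t₀ := 0) (K := 2) (s := fun _ => Set.univ)
      (v := fun _ (w : ℝ × ℝ) => ((-1.6 * Real.sin w.2, 1.6 * Real.sin w.1) : ℝ × ℝ))
    · intro t; exact lip_field.lipschitzOnWith
    · intro t
      exact ⟨((hxd (t + 1)).comp_add_const t 1).prodMk ((hzd (t + 1)).comp_add_const t 1), trivial⟩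
    · intro t
      refine ⟨?_, trivial⟩
      refine HasDerivAt.congr_deriv ((hzd t).neg.prodMk (hxd t)) (Eq.symm ?_)
      simp
    · simp [hx, hz, hu0, hu1, hv1]
  have hx1 : ∀ t, x (t + 1) = -z t := fun t => congrArg Prod.fst (congrFun huniq t)
  have hz1 : ∀ t, z (t + 1) = x t := fun t => congrArg Prod.snd (congrFun huniq t)
  have hx2 : ∀ t, x (t + 2) = -x t := by
    intro t
    rw [show t + 2 = (t + 1) + 1 by ring, hx1, hz1]
  have hzx : ∀ t, z t = x (t - 1) := by
    intro t
    rw [← hz1]; simp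
  have hder : ∀ t, deriv x t = -1.6 * Real.sin (x (t - 1)) := by
    intro t
    rw [(hxd t).deriv, hzx]
  have hdiff : Differentiable ℝ x := fun t => (hxd t).differentiableAt
  refine ⟨π / 2, ?_, x, ?_, ?_, hder, 0, 2, ?_⟩
  · rw [abs_le]
    constructor <;> linarith [Real.pi_gt_d6, Real.pi_lt_d6]
  · rw [contDiff_one_iff_deriv]
    refine ⟨hdiff, ?_⟩
    rw [funext hder]
    have := hdiff.continuous
    fun_prop
  · have : 2 * π / (π / 2) = 4 := by
      have := Real.pi_pos.ne'
      field_simp; norm_num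
    rw [this]
    intro t
    rw [show t + 4 = (t + 2) + 2 by ring, hx2, hx2, neg_neg]
  · have h := hx2 0
    have h0 : 0 < x 0 := by simp [hx, hu0, hv0]
    rw [zero_add] at h
    rw [h]
    intro hh
    linarith
end
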